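/- arXiv:1007.0234 — 3 statements merged into one kernel-verified Lean document; each statement's English description precedes it below -/
import Mathlib

section
/- Let n ≥ 1 be an integer, s ∈ ℝ², and let ε, ω be real numbers with 0 < ε < ω. Then there exists Λ > 0 such that for every λ ≥ Λ and every u ∈ ℝ² with ‖u‖ = 1, there exists t ∈ [√(2λ/(ω+ε)), √(2λ/(ω−ε))] such that s + t·u ≠ 0 and (ω/2)t² − ψ_n(s + t·u) − λ = 0. In other words, for λ large enough, the zero level set of the function g(x) = (ω/2)‖x − s‖² − ψ_n(x) − λ meets every ray emanating from s between the circles of radii √(2λ/(ω+ε)) and √(2λ/(ω−ε)) centered at s. -/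
/-!
On the ray `s + t u` with `t ≥ ‖s‖ + 1` one has `‖s + t u‖ ≥ 1`, so `|ψ_n| ≤ 1` there
(`abs_psi_le_one`). At the endpoints `t² = 2λ/(ω ± ε)` the quantity `(ω/2) t² - λ` equals
`∓ ελ/(ω ± ε)`, whose absolute value is at least `1` once `λ ≥ (ω + ε)/ε`. Hence for `λ` large
`t ↦ (ω/2) t² - ψ_n(s + t u) - λ` is continuous on the interval and changes sign across it, and
the intermediate value theorem applies.
-/

/-- `ψ_n(x₁, x₂) = Re((x₁ + i x₂)^{-n})`, the stream function from the paper. -/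
noncomputable def psi (n : ℕ) (x : EuclideanSpace ℝ (Fin 2)) : ℝ :=
  (((x 0 : ℂ) + (x 1 : ℂ) * Complex.I) ^ (-(n : ℤ))).re

lemma norm_toComplex (x : EuclideanSpace ℝ (Fin 2)) :
    ‖(x 0 : ℂ) + (x 1 : ℂ) * Complex.I‖ = ‖x‖ := by
  rw [Complex.norm_add_mul_I, EuclideanSpace.norm_eq]
  simp

lemma abs_psi_le_one (n : ℕ) (x : EuclideanSpace ℝ (Fin 2)) (hx : 1 ≤ ‖x‖) :
    |psi n x| ≤ 1 := by
  refine (Complex.abs_re_le_norm _).trans ?_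
  rw [norm_zpow, norm_toComplex, zpow_neg, zpow_natCast]
  exact inv_le_one_of_one_le₀ (one_le_pow₀ hx)

lemma continuousOn_psi_ray (n : ℕ) (s u : EuclideanSpace ℝ (Fin 2)) (S : Set ℝ)
    (h : ∀ t ∈ S, 1 ≤ ‖s + t • u‖) : ContinuousOn (fun t : ℝ => psi n (s + t • u)) S := by
  unfold psi
  refine Complex.continuous_re.comp_continuousOn (ContinuousOn.zpow₀ ?_ _ ?_)
  · apply Continuous.continuousOn
    simp only [PiLp.add_apply, PiLp.smul_apply, smul_eq_mul]
    fun_prop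
  · intro t ht
    left
    rw [← norm_pos_iff, norm_toComplex]
    linarith [h t ht]

/-- For `λ` large enough, the zero level set of `g(x) = (ω/2)‖x − s‖² − ψ_n(x) − λ` meets
every ray emanating from `s` between the circles of radii `√(2λ/(ω+ε))` and `√(2λ/(ω−ε))`
centered at `s`. -/
theorem zero_level_set_meets_every_ray (n : ℕ) (hn : 1 ≤ n)
    (s : EuclideanSpace ℝ (Fin 2)) (ε ω : ℝ) (hε : 0 < ε) (hεω : ε < ω) :
    ∃ Λ > 0, ∀ lam : ℝ, Λ ≤ lam → ∀ u : EuclideanSpace ℝ (Fin 2), ‖u‖ = 1 →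
      ∃ t ∈ Set.Icc (Real.sqrt (2 * lam / (ω + ε))) (Real.sqrt (2 * lam / (ω - ε))),
        s + t • u ≠ 0 ∧ ω / 2 * t ^ 2 - psi n (s + t • u) - lam = 0 := by
  have hp : 0 < ω + ε := by linarith
  have hm : 0 < ω - ε := by linarith
  -- The first summand makes the endpoint values exceed `1`, the second forces `t ≥ ‖s‖ + 1`.
  refine ⟨(ω + ε) / ε + (ω + ε) / 2 * (‖s‖ + 1) ^ 2, by positivity, fun lam hlam u hu => ?_⟩
  have h1 : (ω + ε) / ε ≤ lam := le_trans (le_add_of_nonneg_right (by positivity)) hlam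
  have h2 : (ω + ε) / 2 * (‖s‖ + 1) ^ 2 ≤ lam :=
    le_trans (le_add_of_nonneg_left (by positivity)) hlam
  have hl : 0 < lam := lt_of_lt_of_le (by positivity) h1
  have h1' : ω + ε ≤ lam * ε := (div_le_iff₀ hε).1 h1
  have hfar : ∀ t, √(2 * lam / (ω + ε)) ≤ t → 1 ≤ ‖s + t • u‖ := by
    intro t ht
    have ha : ‖s‖ + 1 ≤ √(2 * lam / (ω + ε)) := by
      apply Real.le_sqrt_of_sq_le
      rw [le_div_iff₀ hp]
      linarith
    have hb : ‖t • u‖ ≤ ‖s + t • u‖ + ‖s‖ := by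
      simpa using norm_sub_le (s + t • u) s
    rw [norm_smul, hu, mul_one, Real.norm_eq_abs] at hb
    linarith [le_abs_self t]
  have hle : √(2 * lam / (ω + ε)) ≤ √(2 * lam / (ω - ε)) := by
    apply Real.sqrt_le_sqrt
    gcongr
    linarith
  have hcont : ContinuousOn (fun t : ℝ => ω / 2 * t ^ 2 - psi n (s + t • u) - lam)
      (Set.Icc (√(2 * lam / (ω + ε))) (√(2 * lam / (ω - ε)))) := by
    have := continuousOn_psi_ray n s u
      (Set.Icc (√(2 * lam / (ω + ε))) (√(2 * lam / (ω - ε)))) fun t ht => hfar t ht.1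
    fun_prop
  have hlow : ω / 2 * (√(2 * lam / (ω + ε))) ^ 2 ≤ lam - 1 := by
    rw [Real.sq_sqrt (by positivity), div_mul_div_comm, div_le_iff₀ (by positivity)]
    nlinarith
  have hhigh : lam + 1 ≤ ω / 2 * (√(2 * lam / (ω - ε))) ^ 2 := by
    rw [Real.sq_sqrt (by positivity), div_mul_div_comm, le_div_iff₀ (by positivity)]
    nlinarith
  have hzero : (0 : ℝ) ∈ Set.Icc
      (ω / 2 * (√(2 * lam / (ω + ε))) ^ 2 - psi n (s + √(2 * lam / (ω + ε)) • u) - lam)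
      (ω / 2 * (√(2 * lam / (ω - ε))) ^ 2 - psi n (s + √(2 * lam / (ω - ε)) • u) - lam) := by
    have ha := abs_le.1 (abs_psi_le_one n _ (hfar _ le_rfl))
    have hb := abs_le.1 (abs_psi_le_one n _ (hfar _ hle))
    constructor <;> linarith [ha.1, hb.2]
  obtain ⟨t, ht, hgt⟩ := intermediate_value_Icc hle hcont hzero
  refine ⟨t, ht, fun h0 => ?_, hgt⟩
  have := hfar t ht.1
  rw [h0, norm_zero] at this
  linarith
end

section
/- Let c, c' : ℤ → ℂ be sequences with c_j = 0 and c'_j = 0 unless j = 1 or j ≤ −1, let k ≥ 1 be an integer, and suppose c₁ = c'₁ and c_{−j} = c'_{−j} for all 1 ≤ j ≤ k. Then A_k(c) = A_k(c') and B_k(c) = B_k(c'). In other words, A_k and B_k depend only on the coefficients c₁, c₋₁, c₋₂, …, c₋ₖ; consequently, two solids whose conformal map coefficients agree up to order k produce fluid potentials with the same corresponding terms in their asymptotic expansions. -/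
/-!
Both sums are compared term by term. Let `i` be an admissible index vector. If some later entry
`i_{j+1}` exceeds `1`, the corresponding factor vanishes for both sequences. Otherwise all `k + 1`
entries are at most `1`, and since they sum to `0` each is at least `-k`; so only the coefficients
on which the two sequences agree occur (`coeff_agree_or_prod_zero`). The remaining factor
`conj (c (-i₁))` of `B_k` has `-i₁ ≥ 1`, so it is `conj c₁` or zero.
-/

/-- `A_k(c) = Σ i₁ c_{i₁} ⋯ c_{i_{k+1}}` over `(i₁, …, i_{k+1}) ∈ ℤ^{k+1}` with
`i₁ + ⋯ + i_{k+1} = 0` and `i₁ ≤ −1`. -/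
noncomputable def Acoef (c : ℤ → ℂ) (k : ℕ) : ℂ :=
  ∑ᶠ i ∈ {i : Fin (k + 1) → ℤ | (∑ j, i j) = 0 ∧ i 0 ≤ -1},
    ((i 0 : ℤ) : ℂ) * ∏ j, c (i j)

/-- `B_k(c) = Σ i₁ conj(c_{−i₁}) c_{i₂} ⋯ c_{i_{k+1}}` over `(i₁, …, i_{k+1}) ∈ ℤ^{k+1}`
with `i₁ + ⋯ + i_{k+1} = 0` and `i₁ ≤ −1`. -/
noncomputable def Bcoef (c : ℤ → ℂ) (k : ℕ) : ℂ :=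
  ∑ᶠ i ∈ {i : Fin (k + 1) → ℤ | (∑ j, i j) = 0 ∧ i 0 ≤ -1},
    ((i 0 : ℤ) : ℂ) * (starRingEnd ℂ) (c (-(i 0))) * ∏ j : Fin k, c (i j.succ)

/-- `C_k(c) = Σ (i₁+i₂) conj(c_{−i₁}) c_{i₂} ⋯ c_{i_{k+2}}` over
`(i₁, …, i_{k+2}) ∈ ℤ^{k+2}` with `i₁ + ⋯ + i_{k+2} = 0` and `i₁ + i₂ ≤ −1`. -/
noncomputable def Ccoef (c : ℤ → ℂ) (k : ℕ) : ℂ :=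
  ∑ᶠ i ∈ {i : Fin (k + 2) → ℤ | (∑ j, i j) = 0 ∧ i 0 + i 1 ≤ -1},
    ((i 0 + i 1 : ℤ) : ℂ) * (starRingEnd ℂ) (c (-(i 0))) * ∏ j : Fin (k + 1), c (i j.succ)

/-- Entries at most `1` with total `0` are bounded below by `-k`. -/
lemma neg_le_of_sum_eq_zero {k : ℕ} (i : Fin (k + 1) → ℤ) (hs : ∑ j, i j = 0)
    (hle : ∀ j, i j ≤ 1) (j : Fin (k + 1)) : -(k : ℤ) ≤ i j := by
  have h := Finset.sum_le_card_nsmul (Finset.univ.erase j) i 1 (fun x _ => hle x)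
  simp [Finset.card_erase_of_mem] at h
  linarith

/-- For an index vector of the sums, either every factor agrees for the two sequences, or the
product of the factors after the first vanishes for both. -/
lemma coeff_agree_or_prod_zero (c c' : ℤ → ℂ)
    (hc : ∀ j : ℤ, j ≠ 1 → 0 ≤ j → c j = 0)
    (hc' : ∀ j : ℤ, j ≠ 1 → 0 ≤ j → c' j = 0)
    (k : ℕ) (h1 : c 1 = c' 1)
    (hneg : ∀ j : ℕ, 1 ≤ j → j ≤ k → c (-(j : ℤ)) = c' (-(j : ℤ)))
    (i : Fin (k + 1) → ℤ) (hs : ∑ j, i j = 0) (h0 : i 0 ≤ -1) :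
    (∀ j, c (i j) = c' (i j)) ∨
      (∏ j : Fin k, c (i j.succ) = 0 ∧ ∏ j : Fin k, c' (i j.succ) = 0) := by
  by_cases hle : ∀ j : Fin k, i j.succ ≤ 1
  · left
    have hall : ∀ j, i j ≤ 1 := Fin.cases (by linarith) hle
    intro j
    have hlow := neg_le_of_sum_eq_zero i hs hall j
    have hup := hall j
    generalize i j = m at hlow hup
    by_cases hm1 : m = 1
    · rw [hm1, h1]
    by_cases hm0 : 0 ≤ m
    · rw [hc m hm1 hm0, hc' m hm1 hm0]
    · have h := hneg m.natAbs (by omega) (by omega)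
      rwa [show -(m.natAbs : ℤ) = m by omega] at h
  · right
    push Not at hle
    obtain ⟨j, hj⟩ := hle
    exact ⟨Finset.prod_eq_zero (Finset.mem_univ j) (hc _ (by omega) (by omega)),
      Finset.prod_eq_zero (Finset.mem_univ j) (hc' _ (by omega) (by omega))⟩

/-- `A_k` and `B_k` depend only on the coefficients `c₁, c₋₁, …, c₋ₖ`: two conformal maps
agreeing up to order `k` give the same coefficients `A_k`, `B_k` of the asymptotic
expansion of the fluid potential. -/
theorem Acoef_Bcoef_depend_only_on_truncation (c c' : ℤ → ℂ)
    (hc : ∀ j : ℤ, j ≠ 1 → 0 ≤ j → c j = 0)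
    (hc' : ∀ j : ℤ, j ≠ 1 → 0 ≤ j → c' j = 0)
    (k : ℕ) (hk : 1 ≤ k)
    (h1 : c 1 = c' 1)
    (hneg : ∀ j : ℕ, 1 ≤ j → j ≤ k → c (-(j : ℤ)) = c' (-(j : ℤ))) :
    Acoef c k = Acoef c' k ∧ Bcoef c k = Bcoef c' k := by
  have key := coeff_agree_or_prod_zero c c' hc hc' k h1 hneg
  refine ⟨finsum_mem_congr rfl ?_, finsum_mem_congr rfl ?_⟩
  · rintro i ⟨hs, h0⟩
    rcases key i hs h0 with h | ⟨h, h'⟩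
    · simp only [h]
    · rw [Fin.prod_univ_succ, Fin.prod_univ_succ, h, h', mul_zero, mul_zero, mul_zero, mul_zero]
  · rintro i ⟨hs, h0⟩
    have hconj : c (-(i 0)) = c' (-(i 0)) := by
      by_cases hi : -(i 0) = 1
      · rw [hi, h1]
      · rw [hc _ hi (by omega), hc' _ hi (by omega)]
    rcases key i hs h0 with h | ⟨h, h'⟩
    · simp only [h, hconj]
    · rw [h, h', mul_zero, mul_zero]
end

section
/- Let c : ℤ → ℂ be a sequence with c_j = 0 unless j = 1 or j ≤ −1, let i·c denote the pointwise scaled sequence (i c_j)_{j∈ℤ} (scaling by the imaginary unit, corresponding to rotating the solid shape by angle π/2), and let k ≥ 1. If A_k(i·c) = A_k(c) and A_k(c) ≠ 0, then k ≡ 3 (mod 4); if B_k(i·c) = B_k(c) and B_k(c) ≠ 0, then k ≡ 1 (mod 4); if C_k(i·c) = C_k(c) and C_k(c) ≠ 0, then k ≡ 0 (mod 4). -/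
/-- No finiteness of the support is needed, because `ℂ` has no zero divisors. -/
lemma mul_finsum_mem_complex {α : Type*} (s : Set α) (f : α → ℂ) (a : ℂ) :
    ∑ᶠ i ∈ s, a * f i = a * ∑ᶠ i ∈ s, f i := by
  simp only [← smul_eq_mul, smul_finsum]

lemma Acoef_I_mul (c : ℤ → ℂ) (k : ℕ) :
    Acoef (fun j => Complex.I * c j) k = Complex.I ^ (k + 1) * Acoef c k := by
  unfold Acoef
  rw [← mul_finsum_mem_complex]
  refine finsum_congr fun i => finsum_congr fun _ => ?_
  rw [Finset.prod_mul_distrib, Finset.prod_const, Finset.card_univ, Fintype.card_fin]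
  ring

lemma Bcoef_I_mul (c : ℤ → ℂ) (k : ℕ) :
    Bcoef (fun j => Complex.I * c j) k = (-Complex.I * Complex.I ^ k) * Bcoef c k := by
  unfold Bcoef
  rw [← mul_finsum_mem_complex]
  refine finsum_congr fun i => finsum_congr fun _ => ?_
  rw [Finset.prod_mul_distrib, Finset.prod_const, Finset.card_univ, Fintype.card_fin, map_mul,
    Complex.conj_I]
  ring

lemma Ccoef_I_mul (c : ℤ → ℂ) (k : ℕ) :
    Ccoef (fun j => Complex.I * c j) k = (-Complex.I * Complex.I ^ (k + 1)) * Ccoef c k := by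
  unfold Ccoef
  rw [← mul_finsum_mem_complex]
  refine finsum_congr fun i => finsum_congr fun _ => ?_
  rw [Finset.prod_mul_distrib, Finset.prod_const, Finset.card_univ, Fintype.card_fin, map_mul,
    Complex.conj_I]
  ring

lemma four_dvd_of_I_pow_eq_one {n : ℕ} (h : Complex.I ^ n = 1) : n % 4 = 0 := by
  rw [Complex.I_pow_eq_pow_mod] at h
  have hlt : n % 4 < 4 := Nat.mod_lt _ (by norm_num)
  generalize n % 4 = m at h hlt
  interval_cases m
  · rfl
  · simp [Complex.ext_iff] at h
  · norm_num [Complex.ext_iff] at h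
  · simp [Complex.I_pow_three, Complex.ext_iff] at h

/-- Vanishing pattern modulo 4 for a shape invariant under rotation by `π/2` (i.e. under
scaling of the coefficient sequence by `i`): if `A_k(ic) = A_k(c) ≠ 0` then `k ≡ 3 [4]`;
if `B_k(ic) = B_k(c) ≠ 0` then `k ≡ 1 [4]`; if `C_k(ic) = C_k(c) ≠ 0` then `k ≡ 0 [4]`. -/
theorem coef_mod_four_of_rotation_invariant (c : ℤ → ℂ)
    (hc : ∀ j : ℤ, j ≠ 1 → 0 ≤ j → c j = 0) (k : ℕ) (hk : 1 ≤ k) :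
    ((Acoef (fun j => Complex.I * c j) k = Acoef c k ∧ Acoef c k ≠ 0) → k % 4 = 3) ∧
    ((Bcoef (fun j => Complex.I * c j) k = Bcoef c k ∧ Bcoef c k ≠ 0) → k % 4 = 1) ∧
    ((Ccoef (fun j => Complex.I * c j) k = Ccoef c k ∧ Ccoef c k ≠ 0) → k % 4 = 0) := by
  refine ⟨fun ⟨h, h0⟩ => ?_, fun ⟨h, h0⟩ => ?_, fun ⟨h, h0⟩ => ?_⟩
  · rw [Acoef_I_mul] at h
    have := four_dvd_of_I_pow_eq_one (mul_eq_right₀ h0 |>.mp h)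
    omega
  · rw [Bcoef_I_mul] at h
    have h1 := mul_eq_right₀ h0 |>.mp h
    -- `-I = I ^ 3`, so the factor is `I ^ (k + 3)`
    have := four_dvd_of_I_pow_eq_one (n := k + 3) (by
      rw [← h1, pow_add, Complex.I_pow_three]; ring)
    omega
  · rw [Ccoef_I_mul] at h
    have h1 := mul_eq_right₀ h0 |>.mp h
    have := four_dvd_of_I_pow_eq_one (n := k + 4) (by
      rw [← h1, show k + 4 = k + 1 + 3 by rfl, pow_add, Complex.I_pow_three]; ring)
    omega
end
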